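/- Let n ≥ 1 and s ∈ (0,1). Let u : ℝⁿ → ℝ be bounded and continuous. Then for every x ∈ ℝⁿ, lim_{y→0⁺} (1/d_{n,s}) ∫_{ℝⁿ} y^{2s} u(ξ) (|x-ξ|² + y²)^{-(n+2s)/2} dξ = u(x), where d_{n,s} = ∫_{ℝⁿ} (|z|²+1)^{-(n+2s)/2} dz. -/

import Mathlib

open MeasureTheory Real Filter
open scoped ENNReal Topology

/-! The Poisson kernel is the family of dilations `P_s(z, y) = y⁻ⁿ P_s(z / y, 1)` of the integrable
profile `P_s(·, 1)`, hence an approximate identity as `y → 0⁺`: substituting `ξ = x - y z` turns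
the Poisson integral into `∫ P_s(z, 1) u(x - y z) dz`, which by dominated convergence tends to
`d_{n,s} u(x)`. -/

variable {E F : Type*} [NormedAddCommGroup E] [NormedSpace ℝ E]
  [NormedAddCommGroup F] [NormedSpace ℝ F]

section ApproximateIdentity

variable [FiniteDimensional ℝ E] [MeasurableSpace E] [BorelSpace E] {μ : Measure E}
  [μ.IsAddHaarMeasure]

lemma quasiMeasurePreserving_sub_smul (x : E) {y : ℝ} (hy : y ≠ 0) :
    Measure.QuasiMeasurePreserving (fun z : E => x - y • z) μ μ :=
  (quasiMeasurePreserving_sub_left_of_right_invariant μ x).comp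
    (Measure.quasiMeasurePreserving_smul μ hy)

lemma integral_dilation_smul_eq (φ : E → ℝ) (u : E → F) (x : E) {y : ℝ} (hy : 0 < y) :
    ∫ ξ, ((y ^ Module.finrank ℝ E)⁻¹ * φ (y⁻¹ • (x - ξ))) • u ξ ∂μ =
      ∫ z, φ z • u (x - y • z) ∂μ := by
  have hpow : y ^ Module.finrank ℝ E ≠ 0 := (pow_pos hy _).ne'
  calc ∫ ξ, ((y ^ Module.finrank ℝ E)⁻¹ * φ (y⁻¹ • (x - ξ))) • u ξ ∂μ
      = ∫ w, ((y ^ Module.finrank ℝ E)⁻¹ * φ (y⁻¹ • w)) • u (x - w) ∂μ := by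
        rw [← integral_sub_left_eq_self _ μ x]
        simp only [sub_sub_cancel]
    _ = (y ^ Module.finrank ℝ E)⁻¹ • ∫ w, φ (y⁻¹ • w) • u (x - y • y⁻¹ • w) ∂μ := by
        simp only [mul_smul, integral_smul, smul_inv_smul₀ hy.ne']
    _ = ∫ z, φ z • u (x - y • z) ∂μ := by
        rw [Measure.integral_comp_inv_smul_of_nonneg μ (fun z => φ z • u (x - y • z)) hy.le,
          inv_smul_smul₀ hpow]

lemma tendsto_integral_smul_comp_sub_smul [CompleteSpace F] {φ : E → ℝ} (hφ : Integrable φ μ)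
    {u : E → F} (hu : MemLp u ∞ μ) {x : E} (hx : ContinuousAt u x) :
    Tendsto (fun y : ℝ => ∫ z, φ z • u (x - y • z) ∂μ) (𝓝[≠] 0) (𝓝 ((∫ z, φ z ∂μ) • u x)) := by
  rw [← integral_smul_const]
  refine tendsto_integral_filter_of_dominated_convergence (fun z => ‖φ z‖ * lpNorm u ∞ μ)
    ?measurable ?bounded (hφ.norm.mul_const _) (.of_forall fun z => ?pointwise)
  case measurable =>
    filter_upwards [self_mem_nhdsWithin] with y hy
    exact hφ.aestronglyMeasurable.smul
      (hu.aestronglyMeasurable.comp_quasiMeasurePreserving (quasiMeasurePreserving_sub_smul x hy))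
  case bounded =>
    filter_upwards [self_mem_nhdsWithin] with y hy
    filter_upwards [(quasiMeasurePreserving_sub_smul x hy).ae (ae_le_lpNorm_exponent_top hu)]
      with z hz
    rw [norm_smul]
    gcongr
  case pointwise =>
    have harg : Tendsto (fun y : ℝ => x - y • z) (𝓝[≠] 0) (𝓝 x) := by
      have hcont : Continuous fun y : ℝ => x - y • z := by fun_prop
      simpa using (hcont.tendsto 0).mono_left nhdsWithin_le_nhds
    exact (hx.tendsto.comp harg).const_smul (φ z)

theorem tendsto_integral_dilation_smul [CompleteSpace F] {φ : E → ℝ} (hφ : Integrable φ μ)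
    {u : E → F} (hu : MemLp u ∞ μ) {x : E} (hx : ContinuousAt u x) :
    Tendsto (fun y : ℝ => ∫ ξ, ((y ^ Module.finrank ℝ E)⁻¹ * φ (y⁻¹ • (x - ξ))) • u ξ ∂μ)
      (𝓝[>] 0) (𝓝 ((∫ z, φ z ∂μ) • u x)) := by
  refine ((tendsto_integral_smul_comp_sub_smul hφ hu hx).mono_left (nhdsGT_le_nhdsNE 0)).congr' ?_
  filter_upwards [self_mem_nhdsWithin] with y hy
  exact (integral_dilation_smul_eq φ u x hy).symm

end ApproximateIdentity

section FractionalPoissonKernel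

/-- The Poisson kernel `P_s(z, y) = y^{2s} (|z|² + y²)^{-(n+2s)/2}` of the Caffarelli–Silvestre
extension, for an arbitrary norm on a real vector space of dimension `n`. -/
noncomputable def fractionalPoissonKernel (s : ℝ) (z : E) (y : ℝ) : ℝ :=
  y ^ (2 * s) * (‖z‖ ^ 2 + y ^ 2) ^ (-((Module.finrank ℝ E : ℝ) + 2 * s) / 2)

/-- The normalized Caffarelli–Silvestre extension
`w(x, y) = (1 / d_{n,s}) ∫ P_s(x - ξ, y) u(ξ) dμ(ξ)` of `u` to the upper half-space, where
`d_{n,s}` is written as the integral of `P_s(·, 1)`. -/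
noncomputable def caffarelliSilvestreExtension [MeasurableSpace E] (μ : Measure E) (s : ℝ)
    (u : E → F) (x : E) (y : ℝ) : F :=
  (1 / ∫ z, fractionalPoissonKernel s z 1 ∂μ) • ∫ ξ, fractionalPoissonKernel s (x - ξ) y • u ξ ∂μ

lemma fractionalPoissonKernel_one (s : ℝ) (z : E) :
    fractionalPoissonKernel s z 1 =
      (‖z‖ ^ 2 + 1) ^ (-((Module.finrank ℝ E : ℝ) + 2 * s) / 2) := by
  simp only [fractionalPoissonKernel, one_rpow, one_pow, one_mul]

lemma fractionalPoissonKernel_pos (s : ℝ) (z : E) {y : ℝ} (hy : 0 < y) :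
    0 < fractionalPoissonKernel s z y := by
  unfold fractionalPoissonKernel
  positivity

lemma fractionalPoissonKernel_eq_dilation (s : ℝ) (z : E) {y : ℝ} (hy : 0 < y) :
    fractionalPoissonKernel s z y =
      (y ^ Module.finrank ℝ E)⁻¹ * fractionalPoissonKernel s (y⁻¹ • z) 1 := by
  have hnorm : ‖z‖ ^ 2 + y ^ 2 = y ^ 2 * (‖y⁻¹ • z‖ ^ 2 + 1) := by
    rw [norm_smul, norm_inv, norm_of_nonneg hy.le]
    field_simp
  have hpow : y ^ (2 * s) * (y ^ 2) ^ (-((Module.finrank ℝ E : ℝ) + 2 * s) / 2) =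
      (y ^ Module.finrank ℝ E)⁻¹ := by
    rw [← rpow_natCast y 2, ← rpow_mul hy.le, ← rpow_add hy, ← rpow_natCast y, ← rpow_neg hy.le]
    congr 1
    push_cast
    ring
  rw [fractionalPoissonKernel_one, fractionalPoissonKernel, hnorm,
    mul_rpow (by positivity) (by positivity), ← mul_assoc, hpow]

variable [FiniteDimensional ℝ E] [MeasurableSpace E] [BorelSpace E] (μ : Measure E)
  [μ.IsAddHaarMeasure]

lemma integrable_fractionalPoissonKernel_one {s : ℝ} (hs : 0 < s) :
    Integrable (fun z : E => fractionalPoissonKernel s z 1) μ := by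
  simpa only [fractionalPoissonKernel_one, add_comm (1 : ℝ)] using
    integrable_rpow_neg_one_add_norm_sq (μ := μ) (r := (Module.finrank ℝ E : ℝ) + 2 * s)
      (by linarith)

lemma integral_fractionalPoissonKernel_one_pos {s : ℝ} (hs : 0 < s) :
    0 < ∫ z : E, fractionalPoissonKernel s z 1 ∂μ := by
  have hpos (z : E) : 0 < fractionalPoissonKernel s z 1 := fractionalPoissonKernel_pos s z one_pos
  rw [integral_pos_iff_support_of_nonneg (fun z => (hpos z).le)
    (integrable_fractionalPoissonKernel_one μ hs), Function.support_eq_univ fun z => (hpos z).ne']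
  exact Measure.measure_univ_pos.2 (NeZero.ne μ)

theorem stmt10_general [CompleteSpace F] {s : ℝ} (hs : 0 < s) {u : E → F} (hu : MemLp u ∞ μ)
    {x : E} (hx : ContinuousAt u x) :
    Tendsto (caffarelliSilvestreExtension μ s u x) (𝓝[>] 0) (𝓝 (u x)) := by
  have hlim := (tendsto_integral_dilation_smul
    (integrable_fractionalPoissonKernel_one μ hs) hu hx).const_smul
      (1 / ∫ z : E, fractionalPoissonKernel s z 1 ∂μ)
  rw [smul_smul, one_div_mul_cancel (integral_fractionalPoissonKernel_one_pos μ hs).ne',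
    one_smul] at hlim
  refine hlim.congr' ?_
  filter_upwards [self_mem_nhdsWithin] with y hy
  simp only [caffarelliSilvestreExtension, fractionalPoissonKernel_eq_dilation s _ hy]

end FractionalPoissonKernel

/-- For `s ∈ (0,1)` and bounded continuous `u : ℝⁿ → ℝ`, the normalized
Caffarelli–Silvestre extension attains the boundary value:
`(1/d_{n,s}) ∫ y^{2s} u(ξ)(|x-ξ|²+y²)^{-(n+2s)/2} dξ → u(x)` as `y → 0⁺`,
where `d_{n,s} = ∫ (|z|²+1)^{-(n+2s)/2} dz`. -/
theorem stmt10 {n : ℕ} (hn : 1 ≤ n) (s : ℝ) (hs : s ∈ Set.Ioo (0 : ℝ) 1)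
    (u : EuclideanSpace ℝ (Fin n) → ℝ) (hcont : Continuous u)
    (hbdd : ∃ C : ℝ, ∀ x, |u x| ≤ C)
    (x : EuclideanSpace ℝ (Fin n)) :
    Tendsto
      (fun y : ℝ =>
        (1 / ∫ z : EuclideanSpace ℝ (Fin n), (‖z‖ ^ 2 + 1) ^ (-((n : ℝ) + 2 * s) / 2)) *
          ∫ ξ : EuclideanSpace ℝ (Fin n),
            y ^ (2 * s) * u ξ * (‖x - ξ‖ ^ 2 + y ^ 2) ^ (-((n : ℝ) + 2 * s) / 2))
      (𝓝[>] 0) (𝓝 (u x)) := by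
  obtain ⟨C, hC⟩ := hbdd
  have hu : MemLp u ∞ volume := memLp_top_of_bound hcont.aestronglyMeasurable C (.of_forall hC)
  refine (stmt10_general volume hs.1 hu hcont.continuousAt).congr fun y => ?_
  simp only [caffarelliSilvestreExtension, fractionalPoissonKernel, finrank_euclideanSpace_fin,
    one_rpow, one_pow, one_mul, smul_eq_mul, mul_right_comm]
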